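/- When the meta-algorithm is run with Commit procedure CommitKnown and the feedback is corrupted in at most C rounds, the total regret accumulated during commitment phases satisfies Σ_{ℓ∈L} R(ℓ) ≤ 2 N_F + 6C + 3. -/

import Mathlib

/-!
Every round played at a leaf is charged to one of four resources, and the charges are summed by
induction on the number of rounds (`ledger`).

* On a wrong leaf, `v` lies either left of `L` or at or right of `R`, so a pair `(L, R)` that passes
  the test contains a corrupted answer. A pair costs at most `2` and is paid for by a failed call
  or by a corruption. For the same reason the counter of a wrong leaf never exceeds the number of
  corruptions, hence stays at most `C`, and the algorithm never commits to a wrong leaf.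
* On the correct leaf, posting `L` costs at most the leaf width `2 ^ (-D) ≤ 1 / T`, for a total of
  at most `1`. Posting `R` costs at most `1`, and either the test fails, which requires a
  corruption, or the counter grows, which happens at most `C + 1` times.

A pair may be half completed, so the ledger carries two corrections: `lie` marks a corrupted
answer at `L` that has not been charged yet, and `pend` marks a query of `L` on a wrong leaf that
has not been paid for yet. Altogether the leaf regret is at most
`2 N_F + 2 C + (C + 1) + 1 + 1 = 2 N_F + 3 C + 3`.
-/

namespace RobustPricing

/-- Phase of the current search step: first endpoint query, second endpoint query,
or midpoint query. -/
inductive Ph | checkL | checkR | mid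
deriving DecidableEq

/-- Parent of a node `(d, k)` (representing the dyadic interval `[k/2^d, (k+1)/2^d)`). -/
def parent (p : ℕ × ℕ) : ℕ × ℕ := (p.1 - 1, p.2 / 2)

/-- Left child of a dyadic node. -/
def leftChild (p : ℕ × ℕ) : ℕ × ℕ := (p.1 + 1, 2 * p.2)

/-- Right child of a dyadic node. -/
def rightChild (p : ℕ × ℕ) : ℕ × ℕ := (p.1 + 1, 2 * p.2 + 1)

/-- Left endpoint `L` of the dyadic interval of a node. -/
noncomputable def nodeL (p : ℕ × ℕ) : ℝ := (p.2 : ℝ) / 2 ^ p.1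

/-- Right endpoint `R` of the dyadic interval of a node. -/
noncomputable def nodeR (p : ℕ × ℕ) : ℝ := ((p.2 : ℝ) + 1) / 2 ^ p.1

/-- Midpoint `M = (L+R)/2` of the dyadic interval of a node. -/
noncomputable def nodeM (p : ℕ × ℕ) : ℝ := (2 * (p.2 : ℝ) + 1) / 2 ^ (p.1 + 1)

/-- The leaf `ℓ* = (D, ⌊v·2^D⌋)` at depth `D` containing the valuation `v`. -/
noncomputable def lstar (v : ℝ) (D : ℕ) : ℕ × ℕ := (D, ⌊v * 2 ^ D⌋₊)

/-- State of the meta-algorithm (Algorithm 1) instantiated with the `CommitKnown`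
procedure: current node `nd` of the dyadic tree, phase `ph` within the current search
step, the feedback `sL` observed at the left endpoint in the current safety check, and
the global (never reset) per-leaf counters `ctr` of `CommitKnown`. -/
structure St where
  nd : ℕ × ℕ
  ph : Ph
  sL : Bool
  ctr : ℕ → ℕ

/-- Initial state: the root interval `[0,1)`. -/
def initSt : St := ⟨(0, 0), Ph.checkL, true, fun _ => 0⟩

/-- Price posted by the meta-algorithm with `CommitKnown` (depth of leaves `D`, known
corruption budget `C`).  At a non-leaf node the safety check posts `L` then `R`, and then
the midpoint `M` is posted; at a leaf `ℓ = [L,R)`, while `s_ℓ ≤ C` the procedure posts `L`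
then `R`, and once `s_ℓ > C` it posts `L` in every round. -/
noncomputable def price (D C : ℕ) (s : St) : ℝ :=
  if s.nd.1 = D then
    if s.ctr s.nd.2 ≤ C ∧ s.ph = Ph.checkR then nodeR s.nd else nodeL s.nd
  else
    match s.ph with
    | Ph.checkL => nodeL s.nd
    | Ph.checkR => nodeR s.nd
    | Ph.mid => nodeM s.nd

/-- One-round transition of the meta-algorithm with `CommitKnown`, given the observed
feedback `b` for the posted price.  At a non-leaf node: if the safety check fails
(`σ_L = 0` or `σ_R = 1`) backtrack to the parent, otherwise query the midpoint and descend
to `[M,R)` on `σ_M = 1` and to `[L,M)` on `σ_M = 0`.  At a leaf `ℓ`: while `s_ℓ ≤ C`, post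
`L` then `R`, return FAIL (backtrack to the parent) if `σ_L = 0` or `σ_R = 1` and
otherwise increment `s_ℓ`; once `s_ℓ > C`, commit to posting `L`. -/
def step (D C : ℕ) (s : St) (b : Bool) : St :=
  if s.nd.1 = D then
    if s.ctr s.nd.2 ≤ C then
      match s.ph with
      | Ph.checkL => ⟨s.nd, Ph.checkR, b, s.ctr⟩
      | _ =>
        if s.sL = false ∨ b = true then ⟨parent s.nd, Ph.checkL, true, s.ctr⟩
        else ⟨s.nd, Ph.checkL, true, Function.update s.ctr s.nd.2 (s.ctr s.nd.2 + 1)⟩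
    else s
  else
    match s.ph with
    | Ph.checkL => ⟨s.nd, Ph.checkR, b, s.ctr⟩
    | Ph.checkR =>
      if s.sL = false ∨ b = true then ⟨parent s.nd, Ph.checkL, true, s.ctr⟩
      else ⟨s.nd, Ph.mid, s.sL, s.ctr⟩
    | Ph.mid => ⟨(if b then rightChild s.nd else leftChild s.nd), Ph.checkL, true, s.ctr⟩

/-- State trajectory of the meta-algorithm with `CommitKnown` under the observed feedback
sequence `obs` (the bit `obs t` is the feedback the seller observes at round `t`). -/
def traj (D C : ℕ) (obs : ℕ → Bool) : ℕ → St
  | 0 => initSt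
  | t + 1 => step D C (traj D C obs t) (obs t)

/-- Price posted at round `t`. -/
noncomputable def priceAt (D C : ℕ) (obs : ℕ → Bool) (t : ℕ) : ℝ :=
  price D C (traj D C obs t)

/-- Number of corrupted rounds among the first `T` rounds: rounds where the observed
feedback differs from the truthful feedback `1{p_t ≤ v}`. -/
noncomputable def corruptions (v : ℝ) (D C T : ℕ) (obs : ℕ → Bool) : ℕ :=
  ((Finset.range T).filter fun t => obs t ≠ decide (priceAt D C obs t ≤ v)).card

/-- `N_T`: number of Commit calls returning FAIL (backtracking) on the correct leaf `ℓ*`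
during the first `T` rounds. -/
noncomputable def NT (v : ℝ) (D C T : ℕ) (obs : ℕ → Bool) : ℕ :=
  ((Finset.range T).filter fun t =>
      (traj D C obs t).nd = lstar v D ∧ (traj D C obs (t + 1)).nd ≠ lstar v D).card

/-- `N_F`: number of Commit calls returning FAIL (backtracking) on incorrect leaves
during the first `T` rounds. -/
noncomputable def NF (v : ℝ) (D C T : ℕ) (obs : ℕ → Bool) : ℕ :=
  ((Finset.range T).filter fun t =>
      (traj D C obs t).nd.1 = D ∧ (traj D C obs t).nd ≠ lstar v D ∧
        (traj D C obs (t + 1)).nd ≠ (traj D C obs t).nd).card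

/-- `R(ℓ)`: regret accumulated over the rounds `Q(ℓ)` in which the algorithm runs the
Commit subroutine on the leaf `ℓ`, i.e. `Σ_{t ∈ Q(ℓ)} (v − p_t·1{p_t ≤ v})`. -/
noncomputable def Rleaf (v : ℝ) (D C T : ℕ) (obs : ℕ → Bool) (l : ℕ × ℕ) : ℝ :=
  ∑ t ∈ (Finset.range T).filter (fun t => (traj D C obs t).nd = l),
    (v - priceAt D C obs t * (if priceAt D C obs t ≤ v then 1 else 0))

/-- Cumulative regret over the horizon `T`: `R_T = T·v − Σ_{t<T} p_t·1{p_t ≤ v}`. -/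
noncomputable def regret (v : ℝ) (D C T : ℕ) (obs : ℕ → Bool) : ℝ :=
  (T : ℝ) * v - ∑ t ∈ Finset.range T,
    priceAt D C obs t * (if priceAt D C obs t ≤ v then 1 else 0)

/-! ### Per-round accounting quantities -/

/-- `1` if `s` is halfway through a pair of queries at a leaf whose answer at `L` was corrupted. -/
noncomputable def lie (v : ℝ) (D : ℕ) (s : St) : ℕ :=
  if s.nd.1 = D ∧ s.ph = Ph.checkR ∧ s.sL ≠ decide (nodeL s.nd ≤ v) then 1 else 0

/-- `1` if `s` is halfway through a pair of queries at a wrong leaf. -/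
noncomputable def pend (v : ℝ) (D : ℕ) (s : St) : ℕ :=
  if s.nd.1 = D ∧ s.ph = Ph.checkR ∧ s.nd ≠ lstar v D then 1 else 0

/-- `1` if the answer `b` to the price posted in state `s` is corrupted. -/
noncomputable def corr (v : ℝ) (D C : ℕ) (s : St) (b : Bool) : ℕ :=
  if b ≠ decide (price D C s ≤ v) then 1 else 0

/-- `1` if the answer `b` in state `s` makes Commit fail on a wrong leaf. -/
noncomputable def wrongFail (v : ℝ) (D C : ℕ) (s : St) (b : Bool) : ℕ :=
  if s.nd.1 = D ∧ s.nd ≠ lstar v D ∧ (step D C s b).nd ≠ s.nd then 1 else 0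

/-- Regret of posting the price `p`. -/
noncomputable def loss (v p : ℝ) : ℝ := v - p * (if p ≤ v then 1 else 0)

/-- Regret of the round played in state `s` if it is played at a leaf, and `0` otherwise. -/
noncomputable def leafLoss (v : ℝ) (D C : ℕ) (s : St) : ℝ :=
  if s.nd.1 = D then loss v (price D C s) else 0

/-! ### Dyadic intervals and the loss of a price -/

theorem loss_nonneg {v : ℝ} (hv : 0 ≤ v) (p : ℝ) : 0 ≤ loss v p := by
  unfold loss; split_ifs <;> linarith

theorem loss_le_one {v p : ℝ} (hv1 : v < 1) (hp : 0 ≤ p) : loss v p ≤ 1 := by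
  unfold loss; split_ifs <;> linarith

theorem nodeL_nonneg (p : ℕ × ℕ) : 0 ≤ nodeL p := by unfold nodeL; positivity

theorem nodeR_nonneg (p : ℕ × ℕ) : 0 ≤ nodeR p := by unfold nodeR; positivity

theorem nodeL_lstar_le {v : ℝ} (hv : 0 ≤ v) (D : ℕ) : nodeL (lstar v D) ≤ v := by
  unfold nodeL lstar
  rw [div_le_iff₀ (by positivity)]
  exact Nat.floor_le (by positivity)

theorem lt_nodeR_lstar (v : ℝ) (D : ℕ) : v < nodeR (lstar v D) := by
  unfold nodeR lstar
  rw [lt_div_iff₀ (by positivity)]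
  exact Nat.lt_floor_add_one _

theorem nodeR_eq (p : ℕ × ℕ) : nodeR p = nodeL p + 1 / 2 ^ p.1 := by
  unfold nodeR nodeL; ring

theorem loss_nodeL_lstar {v : ℝ} (hv : 0 ≤ v) (D : ℕ) :
    loss v (nodeL (lstar v D)) ≤ 1 / 2 ^ D := by
  have h1 := nodeL_lstar_le hv D
  have h2 := lt_nodeR_lstar v D
  rw [nodeR_eq] at h2
  have h3 : (lstar v D).1 = D := rfl
  rw [h3] at h2
  unfold loss
  rw [if_pos h1]
  linarith

/-- A leaf whose interval contains `v` is the correct one. -/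
theorem eq_lstar {v : ℝ} (hv : 0 ≤ v) {D : ℕ} {p : ℕ × ℕ} (hp : p.1 = D)
    (hL : nodeL p ≤ v) (hR : v < nodeR p) : p = lstar v D := by
  subst hp
  unfold nodeL at hL
  unfold nodeR at hR
  rw [div_le_iff₀ (by positivity)] at hL
  rw [lt_div_iff₀ (by positivity)] at hR
  refine Prod.ext rfl ?_
  exact ((Nat.floor_eq_iff (by positivity)).2 ⟨hL, hR⟩).symm

/-- The truncated subtraction in `parent` fixes only the root, which is the correct leaf when
`D = 0`. -/
theorem parent_ne {v : ℝ} (hv : 0 ≤ v) (hv1 : v < 1) {D : ℕ} {p : ℕ × ℕ} (hp : p.1 = D)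
    (hne : p ≠ lstar v D) : parent p ≠ p := by
  intro h
  obtain ⟨d, k⟩ := p
  simp only [parent, Prod.mk.injEq] at h
  have hd : d = 0 := by omega
  have hk : k = 0 := by omega
  subst hd hk
  subst hp
  refine hne (eq_lstar hv rfl ?_ ?_)
  · simpa [nodeL] using hv
  · simpa [nodeR] using hv1

/-! ### One round of the algorithm -/

theorem step_ph {D C : ℕ} {s : St} (b : Bool) (h : s.nd.1 = D → s.ph ≠ Ph.mid) :
    (step D C s b).nd.1 = D → (step D C s b).ph ≠ Ph.mid := by
  unfold step
  split_ifs <;> (try split) <;> simp_all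

theorem step_ctr_le {D C : ℕ} {s : St} (b : Bool) (h : ∀ j, s.ctr j ≤ C + 1) (j : ℕ) :
    (step D C s b).ctr j ≤ C + 1 := by
  have hj := h j
  unfold step
  split_ifs <;> (try split) <;> try exact hj
  dsimp only
  rw [Function.update_apply]
  split_ifs <;> omega

/-- Each increment of the counter of a wrong leaf uses up a corruption of its own. -/
theorem step_wrong_ctr {v : ℝ} (hv : 0 ≤ v) {D C : ℕ} {s : St} (b : Bool)
    (hph : s.nd.1 = D → s.ph ≠ Ph.mid) {j : ℕ} (hj : (D, j) ≠ lstar v D) :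
    (step D C s b).ctr j + lie v D (step D C s b) ≤ s.ctr j + lie v D s + corr v D C s b := by
  obtain ⟨nd, ph, sL, ctr⟩ := s
  by_cases hD : nd.1 = D
  · by_cases hc : ctr nd.2 ≤ C
    · cases ph with
      | checkL => simp [step, lie, corr, price, hD, hc]
      | mid => exact absurd rfl (hph hD)
      | checkR =>
        by_cases hf : sL = false ∨ b = true
        · simp [step, lie, hD, hc, hf]; omega
        · simp only [not_or, Bool.not_eq_false, Bool.not_eq_true] at hf
          obtain ⟨rfl, rfl⟩ := hf
          by_cases hjn : j = nd.2
          · subst hjn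
            have hnd : nd ≠ lstar v D := by
              rw [← hD] at hj ⊢; exact hj
            by_cases hL : nodeL nd ≤ v
            · have hR : nodeR nd ≤ v := by
                by_contra hR
                exact hnd (eq_lstar hv hD hL (not_le.1 hR))
              simp [step, lie, corr, price, hD, hc, hL, hR]
            · simp [step, lie, corr, price, hD, hc, hL]
          · simp [step, lie, hD, hc, hjn]; omega
    · simp [step, lie, hD, hc]
  · cases ph with
    | checkL => simp [step, lie, hD]
    | mid => simp [step, lie, hD]
    | checkR =>
      by_cases hf : sL = false ∨ b = true
      · simp [step, lie, hD, hf]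
      · simp [step, lie, hD, hf]

/-- One round of the accounting: the regret of a leaf round is covered by failures on wrong leaves,
corruptions, growth of the counter of `ℓ*`, the leaf width and the change in `lie` and `pend`. -/
theorem step_charge {v : ℝ} (hv : 0 ≤ v) (hv1 : v < 1) {D C : ℕ} {s : St} (b : Bool)
    (hph : s.nd.1 = D → s.ph ≠ Ph.mid)
    (hwrong : s.nd.1 = D → s.nd ≠ lstar v D → s.ctr s.nd.2 ≤ C) :
    leafLoss v D C s + 2 * lie v D (step D C s b) + pend v D s + s.ctr (lstar v D).2 ≤
      2 * wrongFail v D C s b + 2 * corr v D C s b + 2 * lie v D s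
        + (step D C s b).ctr (lstar v D).2 + 1 / 2 ^ D + pend v D (step D C s b) := by
  -- `simp` rewrites `1 / 2 ^ D` to this form in the goals below.
  have hw : (0 : ℝ) ≤ (2 ^ D)⁻¹ := by positivity
  obtain ⟨nd, ph, sL, ctr⟩ := s
  have hcor0 : (0 : ℝ) ≤ corr v D C ⟨nd, ph, sL, ctr⟩ b := Nat.cast_nonneg _
  have hlie0 : (0 : ℝ) ≤ lie v D ⟨nd, ph, sL, ctr⟩ := Nat.cast_nonneg _
  have hLloss := loss_le_one hv1 (nodeL_nonneg nd)
  have hRloss := loss_le_one hv1 (nodeR_nonneg nd)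
  by_cases hD : nd.1 = D
  · by_cases hs : nd = lstar v D
    · have hLs : loss v (nodeL nd) ≤ 1 / 2 ^ D := hs ▸ loss_nodeL_lstar hv D
      have hL : nodeL nd ≤ v := hs ▸ nodeL_lstar_le hv D
      have hR : ¬ nodeR nd ≤ v := not_le.2 (hs ▸ lt_nodeR_lstar v D)
      rw [← hs]
      by_cases hc : ctr nd.2 ≤ C
      · cases ph with
        | checkL =>
          simp [step, lie, corr, price, pend, leafLoss, wrongFail, hD, hc, ← hs, hL]
          simp at hLs
          linarith
        | mid => exact absurd rfl (hph hD)
        | checkR =>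
          by_cases hf : sL = false ∨ b = true
          · have : (1 : ℝ) ≤ corr v D C ⟨nd, Ph.checkR, sL, ctr⟩ b
                + lie v D ⟨nd, Ph.checkR, sL, ctr⟩ := by
              have h0 := hcor0
              have h1 := hlie0
              rcases hf with rfl | rfl
              · have : lie v D ⟨nd, Ph.checkR, false, ctr⟩ = 1 := by simp [lie, hD, hL]
                rw [this]; push_cast; linarith
              · have : corr v D C ⟨nd, Ph.checkR, sL, ctr⟩ true = 1 := by
                  simp [corr, price, hD, hc, hR]
                rw [this]; push_cast; linarith
            have e1 : lie v D (step D C ⟨nd, Ph.checkR, sL, ctr⟩ b) = 0 := by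
              simp [step, lie, hD, hc, hf]
            have e2 : (step D C ⟨nd, Ph.checkR, sL, ctr⟩ b).ctr = ctr := by
              simp [step, hD, hc, hf]
            have e3 : leafLoss v D C ⟨nd, Ph.checkR, sL, ctr⟩ ≤ 1 := by
              simp [leafLoss, price, hD, hc, hRloss]
            have e4 : pend v D ⟨nd, Ph.checkR, sL, ctr⟩ = 0 := by
              simp [pend, ← hs]
            have e5 : (0 : ℝ) ≤ wrongFail v D C ⟨nd, Ph.checkR, sL, ctr⟩ b := Nat.cast_nonneg _
            have e6 : (0 : ℝ) ≤ pend v D (step D C ⟨nd, Ph.checkR, sL, ctr⟩ b) :=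
              Nat.cast_nonneg _
            rw [e1, e2, e4, one_div]
            push_cast
            linarith
          · simp only [not_or, Bool.not_eq_false, Bool.not_eq_true] at hf
            obtain ⟨rfl, rfl⟩ := hf
            simp [step, lie, corr, price, pend, leafLoss, wrongFail, hD, hc, ← hs, hL, hR]
            linarith
      · have e1 : step D C ⟨nd, ph, sL, ctr⟩ b = ⟨nd, ph, sL, ctr⟩ := by
          simp [step, hD, hc]
        have e2 : leafLoss v D C ⟨nd, ph, sL, ctr⟩ = loss v (nodeL nd) := by
          simp [leafLoss, price, hD, hc]
        have e5 : (0 : ℝ) ≤ wrongFail v D C ⟨nd, ph, sL, ctr⟩ b := Nat.cast_nonneg _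
        rw [e1, e2]
        dsimp only
        linarith
    · have hc : ctr nd.2 ≤ C := hwrong hD hs
      cases ph with
      | checkL =>
        simp [step, lie, corr, price, pend, leafLoss, wrongFail, hD, hc, hs]
        linarith
      | mid => exact absurd rfl (hph hD)
      | checkR =>
        by_cases hf : sL = false ∨ b = true
        · have e := parent_ne hv hv1 hD hs
          simp [step, price, pend, leafLoss, wrongFail, hD, hc, hs, hf, e]
          have e1 : lie v D ⟨parent nd, Ph.checkL, true, ctr⟩ = 0 := by simp [lie]
          rw [e1]
          push_cast
          linarith
        · simp only [not_or, Bool.not_eq_false, Bool.not_eq_true] at hf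
          obtain ⟨rfl, rfl⟩ := hf
          have hne : (lstar v D).2 ≠ nd.2 := fun h => hs (Prod.ext hD h.symm)
          by_cases hL : nodeL nd ≤ v
          · have hR : nodeR nd ≤ v := by
              by_contra hR
              exact hs (eq_lstar hv hD hL (not_le.1 hR))
            simp [step, lie, corr, price, pend, leafLoss, wrongFail, hD, hc, hs, hL, hR, hne]
            linarith
          · simp [step, lie, price, pend, leafLoss, wrongFail, hD, hc, hs, hL, hne]
            linarith
  · have e : lie v D (step D C ⟨nd, ph, sL, ctr⟩ b) = 0 := by
      cases ph with
      | checkL => simp [step, lie, hD]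
      | mid => simp [step, lie, hD]
      | checkR =>
        by_cases hf : sL = false ∨ b = true
        · simp [step, lie, hD, hf]
        · simp [step, lie, hD, hf]
    have e2 : (step D C ⟨nd, ph, sL, ctr⟩ b).ctr = ctr := by
      cases ph with
      | checkL => simp [step, hD]
      | mid => simp [step, hD]
      | checkR =>
        by_cases hf : sL = false ∨ b = true
        · simp [step, hD, hf]
        · simp [step, hD, hf]
    have e6 : (0 : ℝ) ≤ pend v D (step D C ⟨nd, ph, sL, ctr⟩ b) := Nat.cast_nonneg _
    have e3 : pend v D ⟨nd, ph, sL, ctr⟩ = 0 := by simp [pend, hD]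
    rw [e, e2, e3]
    simp [leafLoss, wrongFail, hD]
    linarith

/-! ### Summation over rounds -/

theorem corruptions_succ (v : ℝ) (D C n : ℕ) (obs : ℕ → Bool) :
    corruptions v D C (n + 1) obs
      = corruptions v D C n obs + corr v D C (traj D C obs n) (obs n) := by
  simp only [corruptions, Finset.card_filter, Finset.sum_range_succ]
  rfl

theorem NF_succ (v : ℝ) (D C n : ℕ) (obs : ℕ → Bool) :
    NF v D C (n + 1) obs = NF v D C n obs + wrongFail v D C (traj D C obs n) (obs n) := by
  simp only [NF, Finset.card_filter, Finset.sum_range_succ]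
  rfl

theorem traj_ph (D C : ℕ) (obs : ℕ → Bool) (n : ℕ) :
    (traj D C obs n).nd.1 = D → (traj D C obs n).ph ≠ Ph.mid := by
  induction n with
  | zero => simp [traj, initSt]
  | succ n ih => exact step_ph _ ih

theorem traj_ctr_le (D C : ℕ) (obs : ℕ → Bool) (n : ℕ) :
    ∀ j, (traj D C obs n).ctr j ≤ C + 1 := by
  induction n with
  | zero => simp [traj, initSt]
  | succ n ih => exact step_ctr_le _ ih

theorem traj_wrong_ctr {v : ℝ} (hv : 0 ≤ v) (D C : ℕ) (obs : ℕ → Bool) {j : ℕ}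
    (hj : (D, j) ≠ lstar v D) (n : ℕ) :
    (traj D C obs n).ctr j + lie v D (traj D C obs n) ≤ corruptions v D C n obs := by
  induction n with
  | zero => simp [traj, initSt, lie]
  | succ n ih =>
    have h := step_wrong_ctr hv (C := C) (obs n) (traj_ph D C obs n) hj
    rw [corruptions_succ]
    simp only [traj]
    omega

theorem corruptions_mono (v : ℝ) (D C : ℕ) (obs : ℕ → Bool) {m n : ℕ} (h : m ≤ n) :
    corruptions v D C m obs ≤ corruptions v D C n obs := by
  unfold corruptions
  gcongr

/-- The amortized bound on the leaf regret of the first `n` rounds. -/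
theorem ledger {v : ℝ} (hv : 0 ≤ v) (hv1 : v < 1) (D C T : ℕ) (obs : ℕ → Bool)
    (hC : corruptions v D C T obs ≤ C) (n : ℕ) (hn : n ≤ T) :
    ∑ t ∈ Finset.range n, leafLoss v D C (traj D C obs t) + 2 * lie v D (traj D C obs n) ≤
      2 * NF v D C n obs + 2 * corruptions v D C n obs + (traj D C obs n).ctr (lstar v D).2
        + n * (1 / 2 ^ D) + pend v D (traj D C obs n) := by
  induction n with
  | zero => simp [traj, initSt, lie, pend, NF, corruptions]
  | succ n ih =>
    have ih := ih (by omega)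
    have hwrong : (traj D C obs n).nd.1 = D → (traj D C obs n).nd ≠ lstar v D →
        (traj D C obs n).ctr (traj D C obs n).nd.2 ≤ C := by
      intro hD hne
      have h1 := traj_wrong_ctr hv D C obs (j := (traj D C obs n).nd.2)
        (fun h => hne (h ▸ Prod.ext hD rfl)) n
      have h2 := corruptions_mono v D C obs (show n ≤ T by omega)
      omega
    have h := step_charge hv hv1 (obs n) (traj_ph D C obs n) hwrong
    rw [Finset.sum_range_succ, corruptions_succ, NF_succ]
    simp only [traj]
    push_cast
    linarith

/-- Only the leaves with index below `2 ^ D` are summed on the left; the right-hand side counts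
every round at depth `D`. -/
theorem sum_Rleaf_le {v : ℝ} (hv : 0 ≤ v) (D C T : ℕ) (obs : ℕ → Bool) :
    ∑ j ∈ Finset.range (2 ^ D), Rleaf v D C T obs (D, j)
      ≤ ∑ t ∈ Finset.range T, leafLoss v D C (traj D C obs t) := by
  simp only [Rleaf, Finset.sum_filter]
  rw [Finset.sum_comm]
  refine Finset.sum_le_sum fun t _ => ?_
  change ∑ j ∈ Finset.range (2 ^ D),
    (if (traj D C obs t).nd = (D, j) then loss v (price D C (traj D C obs t)) else 0) ≤ _
  have h0 := loss_nonneg hv (price D C (traj D C obs t))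
  unfold leafLoss
  by_cases hD : (traj D C obs t).nd.1 = D
  · have : ∀ j, ((traj D C obs t).nd = (D, j)) ↔ ((traj D C obs t).nd.2 = j) := fun j =>
      ⟨fun h => by rw [h], fun h => Prod.ext hD h⟩
    simp only [this, Finset.sum_ite_eq, hD, if_true]
    split_ifs <;> linarith
  · have : ∀ j, (traj D C obs t).nd ≠ (D, j) := fun j h => hD (by rw [h])
    simp [this, hD]

/-- When the meta-algorithm is run with Commit procedure `CommitKnown`
over horizon `T` with leaves at depth `D = ⌈log₂ T⌉`, valuation `v ∈ [0,1)`, and feedback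
corrupted in at most `C` rounds, the total regret accumulated during commitment phases
satisfies `Σ_{ℓ ∈ L} R(ℓ) ≤ 2·N_F + 6·C + 3`. -/
theorem commitKnown_leaf_regret
    (T C : ℕ) (v : ℝ) (hv : 0 ≤ v) (hv1 : v < 1) (obs : ℕ → Bool)
    (hC : corruptions v (Nat.clog 2 T) C T obs ≤ C) :
    ∑ j ∈ Finset.range (2 ^ Nat.clog 2 T),
        Rleaf v (Nat.clog 2 T) C T obs (Nat.clog 2 T, j)
      ≤ 2 * (NF v (Nat.clog 2 T) C T obs : ℝ) + 6 * (C : ℝ) + 3 := by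
  set D := Nat.clog 2 T with hDdef
  have hsum := sum_Rleaf_le hv D C T obs
  have hled := ledger hv hv1 D C T obs hC T le_rfl
  have hctr : ((traj D C obs T).ctr (lstar v D).2 : ℝ) ≤ C + 1 := by
    exact_mod_cast traj_ctr_le D C obs T _
  have hcor : (corruptions v D C T obs : ℝ) ≤ C := by exact_mod_cast hC
  have hpend : (pend v D (traj D C obs T) : ℝ) ≤ 1 := by
    unfold pend; split_ifs <;> simp
  have hlie : (0 : ℝ) ≤ lie v D (traj D C obs T) := Nat.cast_nonneg _
  have hwidth : (T : ℝ) * (1 / 2 ^ D) ≤ 1 := by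
    rw [mul_one_div, div_le_one (by positivity)]
    exact_mod_cast Nat.le_pow_clog (by norm_num) T
  have hC0 : (0 : ℝ) ≤ C := Nat.cast_nonneg _
  linarith

end RobustPricing
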